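/- Let $A \subseteq \mathbf{R}^{n+1}$ be a set of positive reach. Then $\mathcal{H}^n(K \cap \partial A) < \infty$ for every compact set $K \subseteq \mathbf{R}^{n+1}$. Consequently, $A$ is a set of locally finite perimeter. -/

import Mathlib

open Set Metric MeasureTheory
open scoped ENNReal RealInnerProductSpace
open Filter Topology

/-!
Let `d` be the distance function of `A`. Uniqueness of nearest points makes the nearest-point map
continuous, so `d` has slope `1` in the tube `0 < d < ρ` (`exists_ascent`). Maximising `d` over
balls then shows that points can be pushed outwards along normals, at unit speed and with unchanged
nearest point, until `d = ρ` (`infDist_push`). This gives the Federer inequality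
`2ρ⟪b - p, x - p⟫ ≤ d(x)‖b - p‖²` (`inner_normal_le`), hence a Lipschitz bound for the nearest-point
map and for the retraction that moves points by `s` towards `A` (`dist_retract_le`).

That retraction maps the layer `s < d ≤ s + ε` onto the tube `0 < d ≤ ε`. Comparing the tube with
about `ρ / (4ε)` disjoint layers of this kind shows that its volume in a bounded region is `O(ε)`
(`exists_hausdorffMeasure_outerTube_le`); no smoothness of level sets is needed. Each boundary point
has a ball of radius `ε / 8` in the tube at distance at most `3ε / 8`, so `ε`-separated sets of
boundary points in a compact set have `O(ε⁻ⁿ)` elements, which bounds the Hausdorff measure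
(`hausdorffMeasure_frontier_lt_top`).

For the Gauss–Green pair, the same volume bound controls the difference quotients of the indicator
function of `A` in each coordinate direction; their positive and negative parts, as measures, have
vague limits `pᵢ` and `qᵢ` (`exists_measures_lineDeriv`). Then `μ = ∑ (pᵢ + qᵢ)`, and the components
of `ν` are the differences of the densities of `pᵢ` and `qᵢ` with respect to `μ`.
-/

/-! ### Sets with unique nearest points -/

/-- Every point at distance at most `ρ` from `A` has exactly one nearest point in `A`. Since
`infDist x ∅ = 0`, this fails for `A = ∅` as soon as `0 ≤ ρ`. -/
def UniqueNearest {E : Type*} [NormedAddCommGroup E] (A : Set E) (ρ : ℝ) : Prop :=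
  ∀ x : E, infDist x A ≤ ρ → ∃! a : E, a ∈ A ∧ dist x a = infDist x A

lemma UniqueNearest.nonempty {E : Type*} [NormedAddCommGroup E] {A : Set E} {ρ : ℝ}
    (hρ : 0 < ρ) (h : UniqueNearest A ρ) : A.Nonempty := by
  rcases A.eq_empty_or_nonempty with rfl | hne
  · obtain ⟨a, ha, -⟩ := h 0 (by simpa using hρ.le)
    exact ⟨a, ha.1⟩
  · exact hne

/-- Continuity of the nearest-point projection at `y`, phrased for arbitrary nearest points `q` of
points `z` near `y`. By compactness, the points of `A` that stay away from `p` are uniformly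
farther from `y` than `p` is. -/
lemma nearest_close {E : Type*} [NormedAddCommGroup E] [ProperSpace E] {A : Set E} {ρ : ℝ}
    (hA : IsClosed A) (h : UniqueNearest A ρ) {y p : E}
    (hy : infDist y A ≤ ρ) (hp : p ∈ A) (hyp : dist y p = infDist y A) {ε : ℝ} (hε : 0 < ε) :
    ∃ η > 0, ∀ z q, dist z y < η → q ∈ A → dist z q = infDist z A → dist q p < ε := by
  -- a nearest point of a `z` within distance `1` of `y` lies in this closed ball
  set C : Set E := (A ∩ closedBall y (infDist y A + 2)) \ ball p ε with hC
  have hCc : IsCompact C :=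
    ((isCompact_closedBall y (infDist y A + 2)).inter_left hA).diff isOpen_ball
  have key : ∃ m > infDist y A, ∀ q ∈ C, m ≤ dist y q := by
    rcases C.eq_empty_or_nonempty with h0 | hne
    · exact ⟨infDist y A + 1, by linarith, by simp [h0]⟩
    · obtain ⟨q, hq, hmin⟩ := hCc.exists_isMinOn hne
        (f := fun q => dist y q) (by fun_prop)
      refine ⟨dist y q, lt_of_le_of_ne (infDist_le_dist_of_mem hq.1.1) ?_, fun q' hq' => hmin hq'⟩
      intro heq
      have := (h y hy).unique ⟨hq.1.1, heq.symm⟩ ⟨hp, hyp⟩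
      exact hq.2 (by simpa [this] using hε)
  obtain ⟨m, hm, hmC⟩ := key
  refine ⟨min 1 ((m - infDist y A) / 2), by
    rw [gt_iff_lt, lt_min_iff]; constructor <;> linarith, fun z q hz hq hzq => ?_⟩
  rw [lt_min_iff] at hz
  have h1 : infDist z A ≤ infDist y A + dist z y := infDist_le_infDist_add_dist
  have h2 : dist y q ≤ dist z y + dist z q := dist_triangle_left y q z
  by_contra hcon
  have := hmC q ⟨⟨hq, by rw [mem_closedBall, dist_comm]; linarith⟩, by simpa using hcon⟩
  linarith

lemma norm_unit_sub_le {E : Type*} [NormedAddCommGroup E] [InnerProductSpace ℝ E]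
    {a b : E} (ha : 0 < ‖a‖) (hb : 0 < ‖b‖) :
    ‖‖a‖⁻¹ • a - ‖b‖⁻¹ • b‖ ≤ 2 * ‖a - b‖ / ‖a‖ := by
  have h1 : ‖a‖⁻¹ • a - ‖b‖⁻¹ • b = ‖a‖⁻¹ • ((a - b) + ((‖b‖ - ‖a‖) * ‖b‖⁻¹) • b) := by
    rw [sub_mul, mul_inv_cancel₀ hb.ne', sub_smul, one_smul, sub_add_sub_cancel, smul_sub,
      smul_smul, ← mul_assoc, inv_mul_cancel₀ ha.ne', one_mul]
  have h2 : ‖((‖b‖ - ‖a‖) * ‖b‖⁻¹) • b‖ ≤ ‖a - b‖ := by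
    rw [norm_smul, norm_mul, norm_inv, norm_norm, mul_assoc, inv_mul_cancel₀ hb.ne', mul_one,
      norm_sub_rev a b]
    exact abs_norm_sub_norm_le b a
  rw [h1, norm_smul, norm_inv, norm_norm, inv_mul_eq_div]
  gcongr
  linarith [norm_add_le (a - b) (((‖b‖ - ‖a‖) * ‖b‖⁻¹) • b)]

section Geometry

variable {E : Type*} [NormedAddCommGroup E] [InnerProductSpace ℝ E] [ProperSpace E]
  {A : Set E} {ρ : ℝ}

/-- At a point `y` of the tube outside `A` the distance function has upper slope at least `1`, up
to an arbitrary `δ`: one moves from `y` directly away from its nearest point `p`, and the nearest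
point of the new position is still close to `p`. -/
lemma exists_ascent (hA : IsClosed A) (hρ : 0 < ρ) (h : UniqueNearest A ρ) {y : E}
    (h0 : 0 < infDist y A) (hy : infDist y A ≤ ρ) {δ η : ℝ} (hδ : 0 < δ) (hδ1 : δ < 1)
    (hη : 0 < η) :
    ∃ z, 0 < dist z y ∧ dist z y < η ∧ infDist y A + (1 - δ) * dist z y ≤ infDist z A := by
  obtain ⟨p, ⟨hp, hyp⟩, -⟩ := h y hy
  set d := infDist y A with hd
  obtain ⟨η', hη', hclose⟩ := nearest_close hA h hy hp hyp (ε := δ * d / 2) (by positivity)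
  set t := min η η' / 2 with ht
  have htpos : 0 < t := by have := lt_min hη hη'; positivity
  have hmin : t < min η η' := by have := lt_min hη hη'; rw [ht]; linarith
  rw [lt_min_iff] at hmin
  have hnorm : ‖y - p‖ = d := by rw [← dist_eq_norm, hyp]
  -- the outward unit normal at `p` through `y`
  set u : E := d⁻¹ • (y - p) with hu
  have hun : ‖u‖ = 1 := by
    rw [hu, norm_smul, hnorm, Real.norm_of_nonneg (by positivity)]; field_simp
  have hzy : dist (y + t • u) y = t := by
    rw [dist_eq_norm, add_sub_cancel_left, norm_smul, hun, Real.norm_of_nonneg htpos.le, mul_one]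
  refine ⟨y + t • u, by rw [hzy]; exact htpos, by rw [hzy]; exact hmin.1, ?_⟩
  rw [hzy]
  obtain ⟨q, hq, hzq⟩ := hA.exists_infDist_eq_dist (h.nonempty hρ) (y + t • u)
  have hqp := hclose _ q (by rw [hzy]; exact hmin.2) hq hzq.symm
  rw [hzq, dist_eq_norm]
  have e1 : d ≤ ‖y - q‖ := by rw [← dist_eq_norm]; exact infDist_le_dist_of_mem hq
  have e2 : ‖y - q‖ ≤ d + δ * d / 2 := by
    rw [← dist_eq_norm]
    have := dist_triangle y p q
    rw [dist_comm q p] at hqp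
    linarith
  have e3 : d - δ * d / 2 ≤ ⟪u, y - q⟫ := by
    have : y - q = (y - p) - (q - p) := by abel
    rw [this, inner_sub_right]
    have a1 : ⟪u, y - p⟫ = d := by
      rw [hu, real_inner_smul_left, real_inner_self_eq_norm_sq, hnorm]; field_simp
    have a2 : ⟪u, q - p⟫ ≤ δ * d / 2 := by
      refine (real_inner_le_norm _ _).trans ?_
      rw [hun, one_mul, ← dist_eq_norm]; exact hqp.le
    linarith
  have e4 : ⟪y + t • u - q, y - q⟫ = ‖y - q‖ ^ 2 + t * ⟪u, y - q⟫ := by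
    have : y + t • u - q = (y - q) + t • u := by abel
    rw [this, inner_add_left, real_inner_smul_left, real_inner_self_eq_norm_sq]
  -- project `y + t • u - q` on `y - q` to bound its norm from below
  have e5 := real_inner_le_norm (y + t • u - q) (y - q)
  rw [e4] at e5
  have e6 : (1 - δ) * ‖y - q‖ ≤ ⟪u, y - q⟫ := by
    have : (1 - δ) * ‖y - q‖ ≤ (1 - δ) * (d + δ * d / 2) :=
      mul_le_mul_of_nonneg_left e2 (by linarith)
    nlinarith [mul_pos hδ h0, mul_pos hδ (mul_pos hδ h0)]
  have e7 : (‖y - q‖ + (1 - δ) * t) * ‖y - q‖ ≤ ‖y + t • u - q‖ * ‖y - q‖ := by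
    nlinarith [mul_le_mul_of_nonneg_left e6 htpos.le]
  have := le_of_mul_le_mul_right e7 (by linarith)
  linarith

/-- The distance to `A` can be increased at unit speed until it reaches `ρ`. -/
lemma exists_farther (hA : IsClosed A) (hρ : 0 < ρ) (h : UniqueNearest A ρ) {x : E} {s : ℝ}
    (hs : 0 ≤ s) (h0 : 0 < infDist x A) (hx : infDist x A + s ≤ ρ) :
    ∃ y, dist y x = s ∧ infDist y A = infDist x A + s := by
  have hxs : x ∈ closedBall x s := mem_closedBall_self hs
  have step : ∀ δ : ℝ, 0 < δ → δ < 1 →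
      ∃ y ∈ closedBall x s, infDist x A + (1 - δ) * s ≤ infDist y A := by
    intro δ hδ hδ1
    -- by `exists_ascent`, a maximiser of this function cannot be interior to the ball
    obtain ⟨y, hy, hmax⟩ := (isCompact_closedBall x s).exists_isMaxOn ⟨x, hxs⟩
      (f := fun y => infDist y A - (1 - δ) * dist y x)
      ((continuous_infDist_pt A).sub (by fun_prop)).continuousOn
    refine ⟨y, hy, ?_⟩
    have hyx := hmax hxs
    simp only [dist_self, mul_zero, sub_zero, mem_ofPred_eq] at hyx
    rcases (mem_closedBall.1 hy).lt_or_eq with hlt | heq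
    · exfalso
      have hyA : infDist y A ≤ infDist x A + dist y x := infDist_le_infDist_add_dist
      have : 0 ≤ (1 - δ) * dist y x := mul_nonneg (by linarith) dist_nonneg
      obtain ⟨z, hz0, hz1, hz2⟩ := exists_ascent hA hρ h (y := y) (by linarith) (by linarith)
        (half_pos hδ) (by linarith) (sub_pos.2 hlt)
      have hzx : dist z x ≤ dist z y + dist y x := dist_triangle _ _ _
      have hzm := hmax (show z ∈ closedBall x s by rw [mem_closedBall]; linarith)
      simp only [mem_ofPred_eq] at hzm
      have := mul_le_mul_of_nonneg_left hzx (show 0 ≤ 1 - δ by linarith)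
      nlinarith [mul_pos hδ hz0]
    · rw [← heq]; linarith
  obtain ⟨y, hy, hmax⟩ := (isCompact_closedBall x s).exists_isMaxOn ⟨x, hxs⟩
      (f := fun y => infDist y A) (continuous_infDist_pt A).continuousOn
  have hle : infDist y A ≤ infDist x A + dist y x := infDist_le_infDist_add_dist
  have hge : infDist x A + s ≤ infDist y A := by
    refine le_of_forall_pos_le_add fun ε hε => ?_
    obtain ⟨z, hz, hz'⟩ := step (min (1/2) (ε / (s + 1))) (by positivity)
      ((min_le_left _ _).trans_lt (by norm_num))
    have h1 : infDist z A ≤ infDist y A := hmax hz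
    have h2 : min (1/2) (ε / (s + 1)) * s ≤ ε := by
      calc min (1/2) (ε / (s + 1)) * s ≤ ε / (s + 1) * s := by gcongr; exact min_le_right _ _
        _ ≤ ε / (s + 1) * (s + 1) := by gcongr; linarith
        _ = ε := by field_simp
    linarith
  have hys := mem_closedBall.1 hy
  exact ⟨y, by linarith, by linarith⟩

/-- Moving a point outwards along its normal increases the distance at unit speed, so the nearest
point does not change: the point `y` of `exists_farther` realises equality in
`dist y p ≤ dist y x + dist x p` and hence lies on the ray from `p` through `x`. -/
lemma infDist_push (hA : IsClosed A) (hρ : 0 < ρ) (h : UniqueNearest A ρ) {x p : E} {s : ℝ}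
    (hs : 0 ≤ s) (h0 : 0 < infDist x A) (hx : infDist x A + s ≤ ρ) (hp : p ∈ A)
    (hxp : dist x p = infDist x A) :
    infDist (x + (s / infDist x A) • (x - p)) A = infDist x A + s := by
  obtain ⟨y, hyx, hy⟩ := exists_farther hA hρ h hs h0 hx
  set d := infDist x A
  have h1 : infDist y A ≤ dist y p := infDist_le_dist_of_mem hp
  have h2 : dist y p ≤ dist y x + dist x p := dist_triangle _ _ _
  have h3 : ‖(y - x) + (x - p)‖ = ‖y - x‖ + ‖x - p‖ := by
    rw [sub_add_sub_cancel, ← dist_eq_norm, ← dist_eq_norm, ← dist_eq_norm]; linarith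
  have h4 := (sameRay_iff_norm_add.2 h3).norm_smul_eq
  rw [← dist_eq_norm, ← dist_eq_norm, hyx, hxp] at h4
  have : x + (s / d) • (x - p) = y := by
    rw [div_eq_inv_mul, mul_smul, h4, smul_smul, inv_mul_cancel₀ h0.ne', one_smul]; abel
  rw [this, hy]

/-- Federer inequality for normals of a set of positive reach. It says that `b` lies outside the
open ball of radius `ρ` tangent to `A` at `p` with normal direction `x - p`. -/
lemma inner_normal_le (hA : IsClosed A) (hρ : 0 < ρ) (h : UniqueNearest A ρ) {x p b : E}
    (h0 : 0 < infDist x A) (hx : infDist x A ≤ ρ) (hp : p ∈ A)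
    (hxp : dist x p = infDist x A) (hb : b ∈ A) :
    2 * ρ * ⟪b - p, x - p⟫ ≤ infDist x A * ‖b - p‖ ^ 2 := by
  -- push `x` out to distance exactly `ρ`; no point of `A` is closer to the result than `p`
  have h1 := infDist_push hA hρ h (s := ρ - infDist x A) (by linarith) h0 (by linarith) hp hxp
  set d := infDist x A
  have h2 : x + ((ρ - d) / d) • (x - p) = p + (ρ / d) • (x - p) := by
    rw [sub_div, div_self h0.ne', sub_smul, one_smul]; abel
  rw [h2] at h1
  have h3 : ρ ≤ ‖(b - p) - (ρ / d) • (x - p)‖ := by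
    have : infDist (p + (ρ / d) • (x - p)) A ≤ dist (p + (ρ / d) • (x - p)) b :=
      infDist_le_dist_of_mem hb
    rw [dist_comm, dist_eq_norm, h1] at this
    rw [sub_sub]; linarith
  have h4 : ρ ^ 2 ≤ ‖(b - p) - (ρ / d) • (x - p)‖ ^ 2 := by gcongr
  rw [norm_sub_sq_real, real_inner_smul_right, norm_smul, ← dist_eq_norm x p, hxp,
    Real.norm_of_nonneg (by positivity), div_mul_cancel₀ _ h0.ne'] at h4
  have h5 : 2 * (ρ / d * ⟪b - p, x - p⟫) ≤ ‖b - p‖ ^ 2 := by linarith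
  have h6 := mul_le_mul_of_nonneg_left h5 h0.le
  have h7 : d * (2 * (ρ / d * ⟪b - p, x - p⟫)) = 2 * ρ * ⟪b - p, x - p⟫ := by field_simp
  linarith

/-- On the part of the tube at distance at most `ρ / 2`, the nearest-point projection is
`2`-Lipschitz. -/
lemma dist_nearest_le (hA : IsClosed A) (hρ : 0 < ρ) (h : UniqueNearest A ρ) {x y p q : E}
    (hx0 : 0 < infDist x A) (hx : infDist x A ≤ ρ / 2) (hp : p ∈ A) (hxp : dist x p = infDist x A)
    (hy0 : 0 < infDist y A) (hy : infDist y A ≤ ρ / 2) (hq : q ∈ A)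
    (hyq : dist y q = infDist y A) : ‖p - q‖ ≤ 2 * ‖x - y‖ := by
  have h1 := inner_normal_le hA hρ h hx0 (by linarith) hp hxp hq
  have h2 := inner_normal_le hA hρ h hy0 (by linarith) hq hyq hp
  have h1' : ⟪q - p, x - p⟫ ≤ ‖p - q‖ ^ 2 / 4 := by
    have : infDist x A * ‖q - p‖ ^ 2 ≤ ρ / 2 * ‖q - p‖ ^ 2 := by gcongr
    rw [norm_sub_rev q p] at *
    refine le_of_mul_le_mul_left (a := 2 * ρ) ?_ (by positivity)
    linarith
  have h2' : ⟪p - q, y - q⟫ ≤ ‖p - q‖ ^ 2 / 4 := by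
    have : infDist y A * ‖p - q‖ ^ 2 ≤ ρ / 2 * ‖p - q‖ ^ 2 := by gcongr
    refine le_of_mul_le_mul_left (a := 2 * ρ) ?_ (by positivity)
    linarith
  have h3 : ‖p - q‖ ^ 2 = ⟪q - p, x - p⟫ + ⟪p - q, y - q⟫ + ⟪p - q, x - y⟫ := by
    rw [← real_inner_self_eq_norm_sq, ← neg_sub p q, inner_neg_left, ← inner_neg_right,
      ← inner_add_right, ← inner_add_right]
    congr 1; abel
  have h4 := real_inner_le_norm (p - q) (x - y)
  by_contra hcon
  push Not at hcon
  nlinarith [norm_nonneg (x - y), norm_nonneg (p - q)]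

/-- The retraction moving each point a distance `s` towards its nearest point is `13`-Lipschitz on
`ρ / 4 ≤ dist(·, A) ≤ ρ / 2`. -/
lemma dist_retract_le (hA : IsClosed A) (hρ : 0 < ρ) (h : UniqueNearest A ρ) {x y p q : E} {s : ℝ}
    (hx0 : ρ / 4 ≤ infDist x A) (hx : infDist x A ≤ ρ / 2) (hp : p ∈ A)
    (hxp : dist x p = infDist x A)
    (hy0 : ρ / 4 ≤ infDist y A) (hy : infDist y A ≤ ρ / 2) (hq : q ∈ A)
    (hyq : dist y q = infDist y A) (hs0 : 0 ≤ s) (hs : s ≤ ρ / 2) :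
    ‖(x - (s / infDist x A) • (x - p)) - (y - (s / infDist y A) • (y - q))‖
      ≤ 13 * ‖x - y‖ := by
  have h1 := dist_nearest_le hA hρ h (by linarith) hx hp hxp (by linarith) hy hq hyq
  rw [dist_eq_norm] at hxp hyq
  have h2 : ‖(x - p) - (y - q)‖ ≤ 3 * ‖x - y‖ := by
    have : (x - p) - (y - q) = (x - y) - (p - q) := by abel
    rw [this]; linarith [norm_sub_le (x - y) (p - q)]
  have h3 := norm_unit_sub_le (a := x - p) (b := y - q) (by linarith) (by linarith)
  have h4 : 2 * ‖(x - p) - (y - q)‖ / ‖x - p‖ ≤ 2 * (3 * ‖x - y‖) / (ρ / 4) := by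
    gcongr; linarith
  have h5 : (x - (s / infDist x A) • (x - p)) - (y - (s / infDist y A) • (y - q))
      = (x - y) - s • (‖x - p‖⁻¹ • (x - p) - ‖y - q‖⁻¹ • (y - q)) := by
    simp only [hxp, hyq, div_eq_mul_inv, mul_smul, smul_sub]; abel
  rw [h5]
  refine (norm_sub_le _ _).trans ?_
  rw [norm_smul, Real.norm_of_nonneg hs0]
  have h6 : s * ‖‖x - p‖⁻¹ • (x - p) - ‖y - q‖⁻¹ • (y - q)‖
      ≤ ρ / 2 * (2 * (3 * ‖x - y‖) / (ρ / 4)) :=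
    mul_le_mul hs (h3.trans h4) (norm_nonneg _) (by positivity)
  have h7 : ρ / 2 * (2 * (3 * ‖x - y‖) / (ρ / 4)) = 12 * ‖x - y‖ := by field_simp; ring
  linarith

end Geometry

/-! ### Volume of one-sided tubes and Hausdorff measure of the boundary -/

section Volume

variable {E : Type*} [NormedAddCommGroup E]

/-- The points of the closed ball of radius `M` about the origin that lie outside the closed set
`A`, at distance at most `ε` from it. If `A` is not closed, the points of `closure A \ A` are
left out as well. -/
def outerTube (A : Set E) (M ε : ℝ) : Set E :=
  closedBall 0 M ∩ {x | 0 < infDist x A ∧ infDist x A ≤ ε}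

variable [InnerProductSpace ℝ E] [FiniteDimensional ℝ E] {A : Set E} {ρ : ℝ}

/-- Near every boundary point, the complement of `A` contains a ball of comparable radius inside
the tube: start from a nearby point outside `A` and push it to distance `ε / 4`. -/
lemma exists_ball_subset_outerTube (hA : IsClosed A) (hρ : 0 < ρ) (h : UniqueNearest A ρ)
    {a : E} (ha : a ∈ frontier A) {M ε : ℝ} (haM : ‖a‖ ≤ M) (hε : 0 < ε) (hερ : ε ≤ ρ) :
    ∃ z, dist z a ≤ 3 / 8 * ε ∧ ball z (ε / 8) ⊆ outerTube A (M + ε) ε := by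
  have hproper : ProperSpace E := FiniteDimensional.proper ℝ E
  have haA : a ∈ A := hA.frontier_subset ha
  have hac : a ∈ closure Aᶜ := by rw [frontier_eq_closure_inter_closure] at ha; exact ha.2
  obtain ⟨x, hx, hax⟩ := Metric.mem_closure_iff.1 hac (ε / 16) (by positivity)
  have hx0 : 0 < infDist x A := (hA.notMem_iff_infDist_pos ⟨a, haA⟩).1 hx
  have hxd : infDist x A ≤ dist x a := infDist_le_dist_of_mem haA
  rw [dist_comm] at hax
  obtain ⟨y, hyx, hy⟩ := exists_farther hA hρ h (x := x) (s := ε / 4 - infDist x A)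
    (by linarith) hx0 (by linarith)
  have hya : dist y a ≤ 3 / 8 * ε := by linarith [dist_triangle y x a]
  refine ⟨y, hya, fun w hw => ⟨?_, ?_, ?_⟩⟩
  · rw [mem_ball] at hw
    have h1 : dist w 0 ≤ dist w y + dist y 0 := dist_triangle _ _ _
    have h2 : dist y 0 ≤ dist y a + dist a 0 := dist_triangle _ _ _
    simp only [dist_zero_right] at h1 h2
    rw [mem_closedBall_zero_iff]; linarith
  · have : infDist y A ≤ infDist w A + dist y w := infDist_le_infDist_add_dist
    rw [mem_ball, dist_comm] at hw; linarith
  · have : infDist w A ≤ infDist y A + dist w y := infDist_le_infDist_add_dist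
    rw [mem_ball] at hw; linarith

variable [MeasurableSpace E] [BorelSpace E]

/-- The tube of width `ε` is the image of the layer `s < dist(·, A) ≤ s + ε` under the Lipschitz
retraction of `dist_retract_le`. -/
lemma hausdorffMeasure_outerTube_le_layer (hA : IsClosed A) (hρ : 0 < ρ) (h : UniqueNearest A ρ)
    (M : ℝ) {s ε : ℝ} (hs : ρ / 4 ≤ s) (hε : s + ε ≤ ρ / 2) :
    μH[Module.finrank ℝ E] (outerTube A M ε) ≤ (13 : ℝ≥0∞) ^ Module.finrank ℝ E *
      μH[Module.finrank ℝ E]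
        (closedBall 0 (M + ρ) ∩ {x : E | s < infDist x A ∧ infDist x A ≤ s + ε}) := by
  have hproper : ProperSpace E := FiniteDimensional.proper ℝ E
  choose p hp hxp using fun x : E => hA.exists_infDist_eq_dist (h.nonempty hρ) x
  set T : E → E := fun x => x - (s / infDist x A) • (x - p x) with hT
  set L : Set E := closedBall 0 (M + ρ) ∩ {x : E | s < infDist x A ∧ infDist x A ≤ s + ε}
  have hLip : LipschitzOnWith 13 T L := by
    refine LipschitzOnWith.of_dist_le_mul fun x hx y hy => ?_
    rw [dist_eq_norm, dist_eq_norm]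
    exact dist_retract_le hA hρ h (hs.trans hx.2.1.le) (hx.2.2.trans hε) (hp x) (hxp x).symm
      (hs.trans hy.2.1.le) (hy.2.2.trans hε) (hp y) (hxp y).symm (by linarith)
      (by linarith [hx.2.1, hx.2.2])
  have hsub : outerTube A M ε ⊆ T '' L := by
    rintro z ⟨hzM, hz0, hzε⟩
    have hs0 : 0 < s := by linarith
    have hd := infDist_push hA hρ h hs0.le hz0 (by linarith) (hp z) (hxp z).symm
    -- the preimage of `z` is obtained by pushing `z` outwards by `s`
    set x := z + (s / infDist z A) • (z - p z) with hx
    have hnz : ‖z - p z‖ = infDist z A := by rw [← dist_eq_norm, hxp]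
    have hxpz : x - p z = ((infDist z A + s) / infDist z A) • (z - p z) := by
      rw [add_div, div_self hz0.ne', add_smul, one_smul, hx]; abel
    have hdx : dist x (p z) = infDist x A := by
      rw [dist_eq_norm, hxpz, norm_smul, hnz, hd, Real.norm_of_nonneg (by positivity),
        div_mul_cancel₀ _ hz0.ne']
    have hpx : p x = p z := (h x (by rw [hd]; linarith)).unique ⟨hp x, (hxp x).symm⟩ ⟨hp z, hdx⟩
    refine ⟨x, ⟨?_, by rw [hd]; linarith, by rw [hd]; linarith⟩, ?_⟩
    · rw [mem_closedBall_zero_iff] at hzM ⊢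
      refine (norm_add_le _ _).trans ?_
      rw [norm_smul, hnz, Real.norm_of_nonneg (by positivity), div_mul_cancel₀ _ hz0.ne']
      linarith
    · simp only [hT]
      rw [hpx, hxpz, hd, smul_smul, div_mul_div_cancel₀ (by positivity), hx, add_sub_cancel_right]
  refine (measure_mono hsub).trans ?_
  refine (hLip.hausdorffMeasure_image_le (Nat.cast_nonneg _)).trans_eq ?_
  rw [ENNReal.rpow_natCast]
  rfl

/-- One-sided Minkowski content bound: the volume of the tube in a bounded region is `O(ε)`. About
`ρ / (4 * ε)` disjoint layers of thickness `ε` fit between the distances `ρ / 4` and `ρ / 2`, and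
each has at least a fixed fraction of the volume of the tube. -/
lemma exists_hausdorffMeasure_outerTube_le (hA : IsClosed A) (hρ : 0 < ρ)
    (h : UniqueNearest A ρ) (M : ℝ) :
    ∃ C : ℝ≥0∞, C ≠ ⊤ ∧ ∀ ε : ℝ, 0 < ε → ε ≤ ρ / 8 →
      μH[Module.finrank ℝ E] (outerTube A M ε) ≤ C * ENNReal.ofReal ε := by
  have hproper : ProperSpace E := FiniteDimensional.proper ℝ E
  set m : Measure E := μH[Module.finrank ℝ E] with hm
  set B : ℝ≥0∞ := m (closedBall 0 (M + ρ)) with hB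
  have hBtop : B ≠ ⊤ := (isCompact_closedBall _ _).measure_ne_top
  refine ⟨ENNReal.ofReal (8 / ρ) * (13 ^ Module.finrank ℝ E * B), by
    finiteness, fun ε hε hερ => ?_⟩
  set N : ℕ := ⌊ρ / (4 * ε)⌋₊ with hN
  have hN1 : N * ε ≤ ρ / 4 := by
    have : (N : ℝ) ≤ ρ / (4 * ε) := Nat.floor_le (by positivity)
    calc N * ε ≤ ρ / (4 * ε) * ε := by gcongr
      _ = ρ / 4 := by field_simp
  have hN2 : ρ / 8 ≤ N * ε := by
    have : ρ / (4 * ε) < N + 1 := Nat.lt_floor_add_one _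
    have : ρ / (4 * ε) * ε < (N + 1) * ε := by gcongr
    have e : ρ / (4 * ε) * ε = ρ / 4 := by field_simp
    linarith
  set L : ℕ → Set E := fun k => closedBall 0 (M + ρ) ∩
    {x : E | ρ / 4 + k * ε < infDist x A ∧ infDist x A ≤ ρ / 4 + k * ε + ε} with hL
  have hLm : ∀ k, MeasurableSet (L k) := fun k =>
    measurableSet_closedBall.inter
      ((measurableSet_lt measurable_const (continuous_infDist_pt A).measurable).inter
        (measurableSet_le (continuous_infDist_pt A).measurable measurable_const))
  have hdisj : ∀ i j : ℕ, i < j → Disjoint (L i) (L j) := by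
    intro i j hij
    rw [Set.disjoint_left]
    rintro x ⟨-, -, hx⟩ ⟨-, hx', -⟩
    have : ((i : ℝ) + 1) * ε ≤ j * ε := by gcongr; exact_mod_cast hij
    linarith
  have hsum : ∑ k ∈ Finset.range N, m (L k) ≤ B := by
    rw [← measure_biUnion_finset (fun i _ j _ hij => ?_) fun k _ => hLm k]
    · exact measure_mono (iUnion₂_subset fun k _ => inter_subset_left)
    · rcases lt_or_gt_of_ne hij with hlt | hlt
      · exact hdisj _ _ hlt
      · exact (hdisj _ _ hlt).symm
  have hW : (N : ℝ≥0∞) * m (outerTube A M ε) ≤ 13 ^ Module.finrank ℝ E * B := by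
    calc (N : ℝ≥0∞) * m (outerTube A M ε)
        = ∑ k ∈ Finset.range N, m (outerTube A M ε) := by simp
      _ ≤ ∑ k ∈ Finset.range N, 13 ^ Module.finrank ℝ E * m (L k) := by
          refine Finset.sum_le_sum fun k hk => ?_
          refine hausdorffMeasure_outerTube_le_layer hA hρ h M
            (by have : 0 ≤ (k : ℝ) * ε := by positivity
                linarith) ?_
          have : ((k : ℝ) + 1) * ε ≤ N * ε := by
            gcongr; exact_mod_cast Finset.mem_range.1 hk
          linarith
      _ ≤ _ := by rw [← Finset.mul_sum]; gcongr
  -- `N * ε ≥ ρ / 8`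
  have h1 : (1 : ℝ≥0∞) ≤ ENNReal.ofReal (8 / ρ) * ENNReal.ofReal ε * N := by
    rw [← ENNReal.ofReal_natCast, ← ENNReal.ofReal_mul (by positivity),
      ← ENNReal.ofReal_mul (by positivity), ENNReal.one_le_ofReal, mul_assoc, div_mul_eq_mul_div,
      le_div_iff₀ hρ]
    linarith
  calc m (outerTube A M ε) = 1 * m (outerTube A M ε) := (one_mul _).symm
    _ ≤ ENNReal.ofReal (8 / ρ) * ENNReal.ofReal ε * N * m (outerTube A M ε) := by gcongr
    _ = ENNReal.ofReal (8 / ρ) * ENNReal.ofReal ε * (N * m (outerTube A M ε)) := by ring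
    _ ≤ ENNReal.ofReal (8 / ρ) * ENNReal.ofReal ε * (13 ^ Module.finrank ℝ E * B) := by gcongr
    _ = _ := by ring

lemma exists_measure_outerTube_le (hA : IsClosed A) (hρ : 0 < ρ)
    (h : UniqueNearest A ρ) (μ : Measure E) [μ.IsAddHaarMeasure] (M : ℝ) :
    ∃ C : ℝ≥0∞, C ≠ ⊤ ∧ ∀ ε : ℝ, 0 < ε → ε ≤ ρ / 8 →
      μ (outerTube A M ε) ≤ C * ENNReal.ofReal ε := by
  obtain ⟨C, hC, hCb⟩ := exists_hausdorffMeasure_outerTube_le hA hρ h M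
  have hμ := Measure.isAddLeftInvariant_eq_smul μ (μH[Module.finrank ℝ E])
  set c := Measure.addHaarScalarFactor μ (μH[Module.finrank ℝ E])
  refine ⟨c * C, by finiteness, fun ε h0 h1 => ?_⟩
  rw [hμ, Measure.smul_apply, ENNReal.smul_def, smul_eq_mul, mul_assoc]
  gcongr
  exact hCb ε h0 h1

/-- The balls of `exists_ball_subset_outerTube` at `ε`-separated boundary points are disjoint, so
the volume of the tube bounds the number of such points. -/
lemma card_mul_measure_ball_le (hA : IsClosed A) (hρ : 0 < ρ) (h : UniqueNearest A ρ)
    (μ : Measure E) {M ε : ℝ} (hε : 0 < ε) (hερ : ε ≤ ρ) [μ.IsAddHaarMeasure]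
    (S : Finset E) (hS : (S : Set E) ⊆ frontier A ∩ closedBall 0 M)
    (hsep : (S : Set E).Pairwise fun x y => ε < dist x y) :
    (S.card : ℝ≥0∞) * μ (ball 0 (ε / 8)) ≤ μ (outerTube A (M + ε) ε) := by
  have : ∀ a : S, ∃ z, dist z a.1 ≤ 3 / 8 * ε ∧ ball z (ε / 8) ⊆ outerTube A (M + ε) ε :=
    fun a => exists_ball_subset_outerTube hA hρ h (hS a.2).1
      (by simpa using (hS a.2).2) hε hερ
  choose z hz hzt using this
  calc (S.card : ℝ≥0∞) * μ (ball 0 (ε / 8)) = ∑ a : S, μ (ball (z a) (ε / 8)) := by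
        simp [Measure.addHaar_ball_center]
    _ = μ (⋃ a, ball (z a) (ε / 8)) := by
        rw [measure_iUnion _ (fun _ => measurableSet_ball), tsum_fintype]
        intro a b hab
        refine ball_disjoint_ball ?_
        have h1 : ε < dist a.1 b.1 := hsep a.2 b.2 (fun h => hab (Subtype.ext h))
        have h2 : dist a.1 b.1 ≤ dist a.1 (z a) + dist (z a) (z b) + dist (z b) b.1 :=
          dist_triangle4 _ _ _ _
        rw [dist_comm a.1 (z a)] at h2
        linarith [hz a, hz b]
    _ ≤ _ := measure_mono (iUnion_subset hzt)

/-- Maximal `ε`-separated subsets of `K ∩ frontier A` have at most a constant times `ε⁻ⁿ` points,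
and the balls of radius `ε` around them cover this set. -/
lemma hausdorffMeasure_frontier_lt_top (hA : IsClosed A) (hρ : 0 < ρ) (h : UniqueNearest A ρ)
    {n : ℕ} (hn : Module.finrank ℝ E = n + 1) {K : Set E} (hK : IsCompact K) :
    μH[(n : ℝ)] (K ∩ frontier A) < ⊤ := by
  have hproper : ProperSpace E := FiniteDimensional.proper ℝ E
  have : Nontrivial E := Module.nontrivial_of_finrank_pos (R := ℝ) (by omega)
  obtain ⟨M, hM⟩ := hK.isBounded.subset_closedBall 0
  set m : Measure E := μH[Module.finrank ℝ E]
  obtain ⟨C, hC, hCb⟩ := exists_measure_outerTube_le hA hρ h m (M + ρ)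
  set ω : ℝ≥0∞ := m (ball 0 1)
  have hω0 : ω ≠ 0 := (measure_ball_pos _ _ one_pos).ne'
  have hωtop : ω ≠ ⊤ := measure_ball_lt_top.ne
  set D : ℝ≥0∞ := C * 8 ^ (n + 1) / ω with hD
  have hDtop : D ≠ ⊤ := by rw [hD]; finiteness
  set F := K ∩ frontier A
  have hF : IsCompact F := hK.inter_right isClosed_frontier
  have key : ∀ ε : NNReal, 0 < ε → (ε : ℝ) ≤ ρ / 8 → ∃ S : Finset E, IsCover ε F (S : Set E) ∧
      (S.card : ℝ≥0∞) * ENNReal.ofReal ε ^ n ≤ D := by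
    intro ε hε hερ
    have hfin : packingNumber ε F ≠ ⊤ := by
      obtain ⟨N, -, hNfin, hN⟩ := exists_finite_isCover_of_isCompact (ε := ε / 2)
        (by positivity) hF
      have h1 := packingNumber_two_mul_le_externalCoveringNumber (ε / 2) F
      rw [mul_div_cancel₀ _ two_ne_zero] at h1
      exact ne_top_of_le_ne_top hNfin.encard_lt_top.ne
        (h1.trans hN.externalCoveringNumber_le_encard)
    have hSfin : (maximalSeparatedSet ε F).Finite := by
      rw [← encard_ne_top_iff, encard_maximalSeparatedSet hfin]; exact hfin
    refine ⟨hSfin.toFinset, by simpa using isCover_maximalSeparatedSet hfin, ?_⟩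
    have hε' : (0 : ℝ) < ε := hε
    have hcard := card_mul_measure_ball_le hA hρ h m (M := M) hε' (by linarith) hSfin.toFinset
      (by
        rw [Finite.coe_toFinset]
        refine maximalSeparatedSet_subset.trans fun x hx => ⟨hx.2, hM hx.1⟩)
      (by
        rw [Finite.coe_toFinset]
        intro x hx y hy hxy
        have : (ε : ℝ≥0∞) < edist x y := isSeparated_maximalSeparatedSet hx hy hxy
        rw [edist_nndist] at this
        exact_mod_cast this)
    have htube : m (outerTube A (M + ε) ε) ≤ C * ENNReal.ofReal ε := by
      refine (measure_mono ?_).trans (hCb ε hε' hερ)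
      exact inter_subset_inter_left _ (closedBall_subset_closedBall (by linarith))
    have hball : m (ball 0 ((ε : ℝ) / 8)) * 8 ^ (n + 1) = ENNReal.ofReal ε ^ (n + 1) * ω := by
      rw [Measure.addHaar_ball _ _ (by positivity), hn, ENNReal.ofReal_pow (by positivity),
        mul_right_comm, ← mul_pow]
      congr 2
      rw [← ENNReal.ofReal_ofNat, ← ENNReal.ofReal_mul (by positivity)]
      congr 1
      field_simp
    have hε0 : ENNReal.ofReal ε ≠ 0 := by simpa using hε.ne'
    rw [hD, ENNReal.le_div_iff_mul_le (Or.inl hω0) (Or.inl hωtop)]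
    -- the bound is the volume comparison divided by `ε`
    refine (ENNReal.mul_le_mul_iff_left hε0 ENNReal.ofReal_ne_top).1 ?_
    calc (hSfin.toFinset.card : ℝ≥0∞) * ENNReal.ofReal ε ^ n * ω * ENNReal.ofReal ε
        = hSfin.toFinset.card * (ENNReal.ofReal ε ^ (n + 1) * ω) := by ring
      _ = hSfin.toFinset.card * m (ball 0 ((ε : ℝ) / 8)) * 8 ^ (n + 1) := by
          rw [← hball]; ring
      _ ≤ C * ENNReal.ofReal ε * 8 ^ (n + 1) := mul_le_mul_left (hcard.trans htube) _
      _ = _ := by ring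
  set e : ℕ → NNReal := fun k => (ρ / 8).toNNReal / (k + 1) with he
  have he0 : ∀ k, 0 < e k := fun k => by
    have : 0 < (ρ / 8).toNNReal := Real.toNNReal_pos.2 (by positivity)
    positivity
  have heρ : ∀ k, (e k : ℝ) ≤ ρ / 8 := fun k => by
    simp only [he, NNReal.coe_div, Real.coe_toNNReal _ (show 0 ≤ ρ / 8 by positivity)]
    exact div_le_self (by positivity) (by simp)
  have helim : Tendsto (fun k => (2 : ℝ≥0∞) * e k) atTop (𝓝 0) := by
    have h1 : Tendsto e atTop (𝓝 0) := by
      rw [← NNReal.tendsto_coe]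
      simpa [he, div_eq_mul_inv] using
        (tendsto_one_div_add_atTop_nhds_zero_nat (𝕜 := ℝ)).const_mul ((ρ / 8).toNNReal : ℝ)
    have h2 := ENNReal.Tendsto.const_mul (a := 2) (ENNReal.tendsto_coe.2 h1)
      (Or.inr ENNReal.ofNat_ne_top)
    simpa using h2
  choose S hScov hScard using fun k => key (e k) (he0 k) (heρ k)
  have hdiam : ∀ k (i : E), ediam (closedBall i (e k : ℝ)) ≤ 2 * e k := fun k i => by
    rw [← Metric.closedEBall_coe]; exact Metric.ediam_closedEBall_le
  have hle := Measure.hausdorffMeasure_le_liminf_sum (n : ℝ) F (l := atTop)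
    (fun k => (2 : ℝ≥0∞) * e k) helim (fun k (i : S k) => closedBall i.1 (e k : ℝ))
    (Eventually.of_forall fun k i => hdiam k i) (Eventually.of_forall fun k x hx => by
      obtain ⟨c, hc, hxc⟩ := hScov k hx
      refine mem_iUnion.2 ⟨⟨c, hc⟩, ?_⟩
      change edist x c ≤ e k at hxc
      rw [edist_nndist] at hxc
      rw [mem_closedBall]
      exact_mod_cast hxc)
  refine (hle.trans ?_).trans_lt (show (2 : ℝ≥0∞) ^ n * D < ⊤ by finiteness)
  refine liminf_le_of_le (by isBoundedDefault) fun b hb => ?_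
  obtain ⟨k, hk⟩ := hb.exists
  refine hk.trans ?_
  calc ∑ i : S k, ediam (closedBall i.1 (e k : ℝ)) ^ (n : ℝ)
      ≤ ∑ i : S k, (2 * (e k : ℝ≥0∞)) ^ n := by
        refine Finset.sum_le_sum fun i _ => ?_
        rw [ENNReal.rpow_natCast]
        gcongr
        exact hdiam k i
    _ = 2 ^ n * ((S k).card * ENNReal.ofReal (e k) ^ n) := by
        rw [Finset.sum_const, nsmul_eq_mul, mul_pow, ENNReal.ofReal_coe_nnreal]
        simp only [Finset.card_univ, Fintype.card_coe]
        ring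
    _ ≤ _ := by gcongr; exact hScard k

end Volume

/-! ### Vague limits of measures -/

section WeakLimit

/-- Measures that are locally bounded along an ultrafilter converge vaguely along it. The limits
of the integrals exist by compactness of bounded intervals, and the Riesz–Markov–Kakutani theorem
turns them into a measure. -/
lemma exists_vague_limit {X ι : Type*} [TopologicalSpace X] [T2Space X] [LocallyCompactSpace X]
    [MeasurableSpace X] [BorelSpace X] (U : Ultrafilter ι) (m : ι → Measure X)
    [∀ i, IsFiniteMeasureOnCompacts (m i)]
    (hb : ∀ K : Set X, IsCompact K → ∃ C : ℝ≥0∞, C ≠ ⊤ ∧ ∀ᶠ i in (U : Filter ι), m i K ≤ C) :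
    ∃ μ : Measure X, IsFiniteMeasureOnCompacts μ ∧ ∀ φ : X → ℝ, Continuous φ →
      HasCompactSupport φ → Tendsto (fun i => ∫ x, φ x ∂(m i)) U (𝓝 (∫ x, φ x ∂μ)) := by
  have hlim : ∀ φ : CompactlySupportedContinuousMap X ℝ,
      ∃ l : ℝ, Tendsto (fun i => ∫ x, φ x ∂(m i)) U (𝓝 l) := by
    intro φ
    obtain ⟨C, hC, hCb⟩ := hb _ φ.hasCompactSupport
    obtain ⟨B, hB⟩ := φ.hasCompactSupport.exists_bound_of_continuous φ.continuous
    have hev : ∀ᶠ i in (U : Filter ι),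
        (∫ x, φ x ∂(m i)) ∈ closedBall (0 : ℝ) (max B 0 * C.toReal) := by
      filter_upwards [hCb] with i hi
      rw [mem_closedBall_zero_iff,
        ← setIntegral_eq_integral_of_forall_compl_eq_zero (s := tsupport φ)
          fun x hx => image_eq_zero_of_notMem_tsupport hx]
      refine (norm_setIntegral_le_of_norm_le_const (C := max B 0) (hi.trans_lt hC.lt_top)
        (fun x _ => (hB x).trans (le_max_left _ _))).trans ?_
      gcongr
      exact ENNReal.toReal_mono hC hi
    obtain ⟨l, -, hl⟩ := (isCompact_closedBall (0 : ℝ) _).ultrafilter_le_nhds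
      (U.map fun i => ∫ x, φ x ∂(m i)) (le_principal_iff.2 hev)
    exact ⟨l, hl⟩
  choose l hl using hlim
  have hint : ∀ (φ : CompactlySupportedContinuousMap X ℝ) i, Integrable φ (m i) :=
    fun φ i => φ.continuous.integrable_of_hasCompactSupport φ.hasCompactSupport
  let Λ : CompactlySupportedContinuousMap X ℝ →ₗ[ℝ] ℝ :=
    { toFun := l
      map_add' := fun φ ψ => tendsto_nhds_unique (hl (φ + ψ)) (by
        refine ((hl φ).add (hl ψ)).congr fun i => ?_
        rw [← integral_add (hint φ i) (hint ψ i)]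
        rfl)
      map_smul' := fun c φ => tendsto_nhds_unique (hl (c • φ)) (by
        refine ((hl φ).const_mul c).congr fun i => ?_
        rw [← integral_const_mul]
        rfl) }
  let Λp := PositiveLinearMap.mk₀ Λ fun φ hφ =>
    ge_of_tendsto' (hl φ) fun i => integral_nonneg hφ
  refine ⟨RealRMK.rieszMeasure Λp, inferInstance, fun φ hφ hφc => ?_⟩
  have h1 := RealRMK.integral_rieszMeasure Λp ⟨⟨φ, hφ⟩, hφc⟩
  have h2 := hl ⟨⟨φ, hφ⟩, hφc⟩
  change ∫ x, φ x ∂_ = l _ at h1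
  rw [h1]
  exact h2

end WeakLimit

/-! ### Directional derivatives integrated over the set -/

section Perimeter

variable {E : Type*} [NormedAddCommGroup E]

/-- The points outside `A` that lie in the translate `A + v`. -/
def enterSet (A : Set E) (v : E) : Set E := {x | x - v ∈ A} \ A

/-- The points of `A` that do not lie in the translate `A + v`. -/
def exitSet (A : Set E) (v : E) : Set E := A \ {x | x - v ∈ A}

lemma enterSet_inter_subset {A : Set E} (hA : IsClosed A) (hne : A.Nonempty) {v : E} {M t : ℝ}
    (hv : ‖v‖ ≤ t) : enterSet A v ∩ closedBall 0 M ⊆ outerTube A M t := by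
  rintro x ⟨⟨hx, hxA⟩, hxM⟩
  refine ⟨hxM, (hA.notMem_iff_infDist_pos hne).1 hxA, ?_⟩
  refine (infDist_le_dist_of_mem (show x - v ∈ A from hx)).trans ?_
  rwa [dist_eq_norm, sub_sub_cancel]

lemma exitSet_inter_subset {A : Set E} (hA : IsClosed A) {v : E} {M t : ℝ}
    (hv : ‖v‖ ≤ t) : exitSet A v ∩ closedBall 0 M ⊆
      (fun x => x - v) ⁻¹' outerTube A (M + t) t := by
  rintro x ⟨⟨hx, hxA⟩, hxM⟩
  rw [mem_closedBall_zero_iff] at hxM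
  refine ⟨?_, (hA.notMem_iff_infDist_pos ⟨x, hx⟩).1 hxA, ?_⟩
  · rw [mem_closedBall_zero_iff]
    exact (norm_sub_le _ _).trans (add_le_add hxM hv)
  · refine (infDist_le_dist_of_mem hx).trans ?_
    rwa [dist_comm, dist_eq_norm, sub_sub_cancel]

variable [InnerProductSpace ℝ E] [FiniteDimensional ℝ E] [MeasurableSpace E] [BorelSpace E]
  {A : Set E} {ρ : ℝ}

lemma integral_translate_sub {A : Set E} (hA : MeasurableSet A) (v : E) {φ : E → ℝ}
    (hφ : Integrable φ) :
    ∫ x in A, (φ (x + v) - φ x) = (∫ x in enterSet A v, φ x) - ∫ x in exitSet A v, φ x := by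
  set T : Set E := (fun x => x - v) ⁻¹' A
  have hT : MeasurableSet T := (measurable_sub_const v) hA
  have h1 : ∫ x in A, φ (x + v) = ∫ x in T, φ x := by
    rw [← integral_indicator hA, ← integral_indicator hT,
      ← integral_add_right_eq_self (T.indicator φ) v]
    congr 1
    ext x
    have hmem : x + v ∈ T ↔ x ∈ A := by
      change x + v - v ∈ A ↔ _
      rw [add_sub_cancel_right]
    by_cases hx : x ∈ A
    · rw [indicator_of_mem hx, indicator_of_mem (hmem.2 hx)]
    · rw [indicator_of_notMem hx, indicator_of_notMem (mt hmem.1 hx)]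
  have h2 := integral_inter_add_sdiff (s := T) (t := A) hA hφ.integrableOn (μ := volume)
  have h3 := integral_inter_add_sdiff (s := A) (t := T) hT hφ.integrableOn (μ := volume)
  rw [integral_sub (hφ.comp_add_right v).integrableOn hφ.integrableOn, h1, ← h2, ← h3,
    inter_comm A T]
  change _ = (∫ x in T \ A, φ x) - ∫ x in A \ T, φ x
  ring

/-- The distributional derivative of the indicator function of `A` in a unit direction `v` is a
difference of two Radon measures. The integral of `∂ᵥφ` over `A` is the limit of `t⁻¹` times the
integral of `φ` over `enterSet A (t • v)` minus that over `exitSet A (t • v)`; both sets lie, up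
to translation, in a tube of width `t`, so the rescaled volume measures on them are locally
bounded and have vague limits. -/
lemma exists_measures_lineDeriv (hA : IsClosed A) (hρ : 0 < ρ) (h : UniqueNearest A ρ) (v : E)
    (hv : ‖v‖ = 1) :
    ∃ μ ν : Measure E, IsFiniteMeasureOnCompacts μ ∧ IsFiniteMeasureOnCompacts ν ∧
      ∀ φ : E → ℝ, ContDiff ℝ 1 φ → HasCompactSupport φ →
        ∫ x in A, lineDeriv ℝ φ x v = (∫ x, φ x ∂μ) - ∫ x, φ x ∂ν := by
  have hne := h.nonempty hρ
  let U : Ultrafilter ℝ := Ultrafilter.of (𝓝[>] 0)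
  have hU : (U : Filter ℝ) ≤ 𝓝[>] 0 := Ultrafilter.of_le _
  have hfin : ∀ (t : ℝ) (S : Set E), IsFiniteMeasureOnCompacts
      (ENNReal.ofReal t⁻¹ • (volume : Measure E).restrict S) := fun t S =>
    ⟨fun K hK => by
      rw [Measure.smul_apply, smul_eq_mul]
      exact ENNReal.mul_lt_top ENNReal.ofReal_lt_top
        ((Measure.restrict_apply_le _ _).trans_lt hK.measure_lt_top)⟩
  have hsmall : ∀ᶠ t : ℝ in U, 0 < t ∧ t ≤ ρ / 8 ∧ t < 1 := by
    refine hU ?_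
    filter_upwards [Ioo_mem_nhdsGT (show 0 < min (ρ / 8) 1 by positivity)] with t ht
    exact ⟨ht.1, (ht.2.trans_le (min_le_left _ _)).le, ht.2.trans_le (min_le_right _ _)⟩
  have hscale : ∀ (C : ℝ≥0∞) (t : ℝ), 0 < t → ENNReal.ofReal t⁻¹ * (C * ENNReal.ofReal t) = C := by
    intro C t ht
    rw [mul_left_comm, ← ENNReal.ofReal_mul (by positivity), inv_mul_cancel₀ ht.ne',
      ENNReal.ofReal_one, mul_one]
  have hnorm : ∀ t : ℝ, 0 < t → ‖t • v‖ ≤ t := fun t ht => by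
    rw [norm_smul, hv, mul_one, Real.norm_of_nonneg ht.le]
  obtain ⟨μ, hμ, hμl⟩ := exists_vague_limit U
    (fun t : ℝ => ENNReal.ofReal t⁻¹ • (volume : Measure E).restrict (enterSet A (t • v))) (by
      intro K hK
      obtain ⟨M, hM⟩ := hK.isBounded.subset_closedBall 0
      obtain ⟨C, hC, hCb⟩ := exists_measure_outerTube_le hA hρ h volume M
      refine ⟨C, hC, ?_⟩
      filter_upwards [hsmall] with t ⟨ht0, ht1, _⟩
      rw [Measure.smul_apply, smul_eq_mul, Measure.restrict_apply hK.measurableSet,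
        ← hscale C t ht0]
      gcongr
      refine (measure_mono ?_).trans (hCb t ht0 ht1)
      refine Subset.trans ?_ (enterSet_inter_subset hA hne (hnorm t ht0))
      exact fun x hx => ⟨hx.2, hM hx.1⟩)
  obtain ⟨ν, hν, hνl⟩ := exists_vague_limit U
    (fun t : ℝ => ENNReal.ofReal t⁻¹ • (volume : Measure E).restrict (exitSet A (t • v))) (by
      intro K hK
      obtain ⟨M, hM⟩ := hK.isBounded.subset_closedBall 0
      obtain ⟨C, hC, hCb⟩ := exists_measure_outerTube_le hA hρ h volume (M + 1)
      refine ⟨C, hC, ?_⟩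
      filter_upwards [hsmall] with t ⟨ht0, ht1, ht2⟩
      rw [Measure.smul_apply, smul_eq_mul, Measure.restrict_apply hK.measurableSet,
        ← hscale C t ht0]
      gcongr
      refine le_trans ?_ (hCb t ht0 ht1)
      rw [← measure_preimage_add_right volume (-(t • v)) (outerTube A (M + 1) t)]
      simp_rw [← sub_eq_add_neg]
      refine measure_mono (Subset.trans ?_
        ((exitSet_inter_subset hA (M := M) (hnorm t ht0)).trans (preimage_mono ?_)))
      · exact fun x hx => ⟨hx.2, hM hx.1⟩
      · exact inter_subset_inter_left _ (closedBall_subset_closedBall (by linarith)))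
  refine ⟨μ, ν, hμ, hν, fun φ hφ hφc => ?_⟩
  obtain ⟨L, hL⟩ := hφ.lipschitzWith_of_hasCompactSupport hφc one_ne_zero
  obtain ⟨M, hM⟩ := hφc.isBounded.subset_closedBall 0
  set B : Set E := closedBall 0 (M + 1)
  have hφB : ∀ (t : ℝ), 0 ≤ t → t ≤ 1 → ∀ x ∉ B, φ (x + t • v) = 0 := by
    intro t ht0 ht1 x hx
    refine image_eq_zero_of_notMem_tsupport fun hmem => hx ?_
    have h1 := mem_closedBall_zero_iff.1 (hM hmem)
    rw [mem_closedBall_zero_iff]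
    have h2 := norm_sub_le (x + t • v) (t • v)
    rw [add_sub_cancel_right, norm_smul, hv, Real.norm_of_nonneg ht0] at h2
    linarith
  have hAB : MeasurableSet (A ∩ B) := hA.measurableSet.inter measurableSet_closedBall
  have hg : Integrable ((A ∩ B).indicator fun _ => (1 : ℝ)) :=
    (integrable_indicator_iff hAB).2 <| integrableOn_const
      ((measure_mono inter_subset_right).trans_lt measure_closedBall_lt_top).ne
  have hmul : ∀ f : E → ℝ, (∀ x ∉ B, f x = 0) →
      ∫ x, f x * (A ∩ B).indicator (fun _ => (1 : ℝ)) x = ∫ x in A, f x := by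
    intro f hf
    rw [← integral_indicator hA.measurableSet]
    congr 1
    ext x
    by_cases hxB : x ∈ B <;> by_cases hxA : x ∈ A <;> simp [hxA, hxB, hf]
  -- the library lemma needs an integrable weight, so `A` is cut off outside the support of `φ`
  have hlim := hL.integral_inv_smul_sub_mul_tendsto_integral_lineDeriv_mul hg v
  rw [hmul _ fun x hx => ?_] at hlim
  swap
  · have : φ =ᶠ[𝓝 x] 0 := by
      have : (tsupport φ)ᶜ ∈ 𝓝 x := (isClosed_tsupport φ).isOpen_compl.mem_nhds fun hmem => hx
        (closedBall_subset_closedBall (by linarith) (hM hmem))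
      filter_upwards [this] with y hy using image_eq_zero_of_notMem_tsupport hy
    rw [this.lineDeriv_eq]
    simp [lineDeriv]
  refine tendsto_nhds_unique (hlim.mono_left hU) ?_
  refine ((hμl φ hφ.continuous hφc).sub (hνl φ hφ.continuous hφc)).congr' ?_
  filter_upwards [hsmall] with t ⟨ht0, _, ht1⟩
  rw [hmul _ fun x hx => ?_]
  swap
  · have := hφB 0 le_rfl zero_le_one x hx
    rw [zero_smul, add_zero] at this
    rw [hφB t ht0.le ht1.le x hx, this, sub_zero, smul_zero]
  rw [integral_smul, integral_translate_sub hA.measurableSet _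
    (hφ.continuous.integrable_of_hasCompactSupport hφc), integral_smul_measure,
    integral_smul_measure, ENNReal.toReal_ofReal (by positivity), smul_sub]

end Perimeter

/-! ### The Gauss–Green pair -/

section Polar

/-- Finitely many Radon measures have measurable real densities with respect to their sum. -/
lemma exists_density_of_finite_family {X ι : Type*} [Fintype ι] [TopologicalSpace X]
    [LocallyCompactSpace X] [SecondCountableTopology X] [T2Space X]
    [MeasurableSpace X] [BorelSpace X] (m : ι → Measure X)
    (hm : ∀ i, IsFiniteMeasureOnCompacts (m i)) :
    ∃ (μ : Measure X) (f : ι → X → ℝ), IsLocallyFiniteMeasure μ ∧ (∀ i, Measurable (f i)) ∧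
      ∀ i (φ : X → ℝ), Integrable φ (m i) →
        Integrable (fun x => f i x * φ x) μ ∧ ∫ x, f i x * φ x ∂μ = ∫ x, φ x ∂(m i) := by
  set μ : Measure X := ∑ i, m i with hμ
  have hfin : IsFiniteMeasureOnCompacts μ := ⟨fun K hK => by
    rw [hμ, Measure.finsetSum_apply]
    exact ENNReal.sum_lt_top.2 fun i _ => hK.measure_lt_top⟩
  have hac : ∀ i, m i ≪ μ := fun i => by
    refine Measure.absolutelyContinuous_of_le ?_
    exact Finset.single_le_sum (f := m) (fun j _ => Measure.zero_le _) (Finset.mem_univ i)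
  refine ⟨μ, fun i x => ((m i).rnDeriv μ x).toReal, inferInstance,
    fun i => (Measure.measurable_rnDeriv _ _).ennreal_toReal, fun i φ hφ => ⟨?_, ?_⟩⟩
  · exact (integrable_rnDeriv_smul_iff (hac i)).2 hφ
  · exact integral_rnDeriv_smul (hac i)

end Polar

/-- A set of positive reach has boundary of locally finite `n`-dimensional Hausdorff
measure; consequently it has locally finite perimeter (it admits a Gauss–Green pair). -/
theorem positive_reach_locally_finite_perimeter (n : ℕ)
    (A : Set (EuclideanSpace ℝ (Fin (n+1)))) (hA : IsClosed A)
    (hreach : ∃ ρ : ℝ, 0 < ρ ∧ ∀ x : EuclideanSpace ℝ (Fin (n+1)),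
      infDist x A ≤ ρ → ∃! a : EuclideanSpace ℝ (Fin (n+1)),
        a ∈ A ∧ dist x a = infDist x A) :
    (∀ K : Set (EuclideanSpace ℝ (Fin (n+1))), IsCompact K →
        μH[(n : ℝ)] (K ∩ frontier A) < ⊤) ∧
    ∃ (μ : Measure (EuclideanSpace ℝ (Fin (n+1))))
      (ν : EuclideanSpace ℝ (Fin (n+1)) → EuclideanSpace ℝ (Fin (n+1))),
      IsLocallyFiniteMeasure μ ∧ Measurable ν ∧
      ∀ X : EuclideanSpace ℝ (Fin (n+1)) → EuclideanSpace ℝ (Fin (n+1)),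
        ContDiff ℝ 1 X → HasCompactSupport X →
        (∫ x in A, ∑ i, fderiv ℝ X x (EuclideanSpace.single i (1 : ℝ)) i)
          = ∫ x, ⟪X x, ν x⟫ ∂μ := by
  obtain ⟨ρ, hρ, h⟩ := hreach
  refine ⟨fun K hK => hausdorffMeasure_frontier_lt_top hA hρ h (by simp) hK, ?_⟩
  choose p q hp hq hpq using fun i : Fin (n + 1) =>
    exists_measures_lineDeriv hA hρ h (EuclideanSpace.single i (1 : ℝ)) (by simp)
  obtain ⟨μ, f, hμ, hf, hfm⟩ := exists_density_of_finite_family (Sum.elim p q)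
    (by rintro (i | i) <;> simp only [Sum.elim_inl, Sum.elim_inr] <;> infer_instance)
  refine ⟨μ, fun x => WithLp.toLp 2 fun i => f (.inl i) x - f (.inr i) x, hμ, ?_, ?_⟩
  · exact (WithLp.measurable_toLp 2 _).comp
      (measurable_pi_lambda _ fun i => (hf (.inl i)).sub (hf (.inr i)))
  intro X hX hXc
  have hXi : ∀ i, ContDiff ℝ 1 fun x => X x i := fun i => (contDiff_euclidean.1 hX) i
  have hXic : ∀ i, HasCompactSupport fun x => X x i := fun i =>
    hXc.comp_left (g := fun y : EuclideanSpace ℝ (Fin (n + 1)) => y i) rfl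
  have hline : ∀ i x, fderiv ℝ X x (EuclideanSpace.single i (1 : ℝ)) i
      = lineDeriv ℝ (fun y => X y i) x (EuclideanSpace.single i (1 : ℝ)) := by
    intro i x
    have h1 : HasFDerivAt X (fderiv ℝ X x) x :=
      (hX.differentiable one_ne_zero x).hasFDerivAt
    have h2 := ((EuclideanSpace.proj (𝕜 := ℝ) i).hasFDerivAt.comp x h1).hasLineDerivAt
      (EuclideanSpace.single i (1 : ℝ))
    exact h2.lineDeriv.symm
  have hint : ∀ i, Integrable
      (fun x => fderiv ℝ X x (EuclideanSpace.single i (1 : ℝ)) i) := by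
    intro i
    refine Continuous.integrable_of_hasCompactSupport ?_ ?_
    · have := hX.continuous_fderiv one_ne_zero
      fun_prop
    · exact (hXc.fderiv ℝ).comp_left
        (g := fun T : EuclideanSpace ℝ (Fin (n + 1)) →L[ℝ] EuclideanSpace ℝ (Fin (n + 1)) =>
          T (EuclideanSpace.single i (1 : ℝ)) i) rfl
  have hpi : ∀ i, Integrable (fun x => X x i) (p i) := fun i =>
    (hXi i).continuous.integrable_of_hasCompactSupport (hXic i)
  have hqi : ∀ i, Integrable (fun x => X x i) (q i) := fun i =>
    (hXi i).continuous.integrable_of_hasCompactSupport (hXic i)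
  have hinner : ∀ x, ⟪X x, WithLp.toLp 2 fun i => f (.inl i) x - f (.inr i) x⟫
      = ∑ i, (f (.inl i) x * X x i - f (.inr i) x * X x i) := by
    intro x
    simp [PiLp.inner_apply, sub_mul]
  simp_rw [hinner]
  rw [integral_finsetSum _ fun i _ => (hint i).integrableOn,
    integral_finsetSum _
      (f := fun i x => f (.inl i) x * X x i - f (.inr i) x * X x i) fun i _ =>
      (hfm (.inl i) _ (hpi i)).1.sub (hfm (.inr i) _ (hqi i)).1]
  refine Finset.sum_congr rfl fun i _ => ?_
  rw [integral_sub (hfm (.inl i) _ (hpi i)).1 (hfm (.inr i) _ (hqi i)).1,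
    (hfm (.inl i) _ (hpi i)).2, (hfm (.inr i) _ (hqi i)).2]
  simp_rw [hline]
  exact hpq i _ (hXi i) (hXic i)
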